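/- Let d be an odd integer with 1 ≤ d ≤ 2l−1 and d ≠ l, and let w be an integer with γ^w = 2 in F_q (w = ind_γ 2). Then J_{2l²}(dl, l²) ≡ −ζ_{l²}^{−wdl} (mod (1−ζ_{l²})²), i.e. (J_{2l²}(dl, l²) + ζ_{l²}^{−wdl})/(1−ζ_{l²})² lies in the ring of integers of ℚ(ζ_{2l²}). -/

import Mathlib

open Complex Finset

/-- The `i`-th power character: `χ^i(v) = χ(v)^i` for `v ≠ 0`, with the convention
`χ^i(0) = 0` (in particular `χ^0(0) = 0`). -/
noncomputable def charPow {F : Type*} [DecidableEq F] [Zero F] (χ : F → ℂ) (i : ℤ) (v : F) : ℂ :=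
  if v = 0 then 0 else χ v ^ i

/-- The Jacobi sum `J_e(i,j) = ∑_{v ∈ F_q} χ_e^i(v) χ_e^j(v+1)`. -/
noncomputable def jSum {F : Type*} [Field F] [Fintype F] [DecidableEq F]
    (χ : F → ℂ) (i j : ℤ) : ℂ :=
  ∑ v : F, charPow χ i v * charPow χ j (v + 1)

/-!
Write `η = χ ^ (l ^ 2)`, the quadratic character, and `ω = ζ_{l²} ^ l`, of order `l`. As `d` and `l`
have the same parity, `χ ^ (d * l) = η * ρ` for a power `ρ` of `χ ^ (2 * l)`, whose nonzero values
are powers of `ω`. So `ρ` becomes trivial modulo `1 - ω`, and there the Jacobi sum agrees with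
`∑ v, η v * η (v + 1) = -1`, while every power of `ω` is `1`. Finally `(1 - ζ_{l²}) ^ 2` divides
`1 - ω = (1 - ζ_{l²}) * ∑ i < l, ζ_{l²} ^ i`, since the second factor is `l` modulo `1 - ζ_{l²}` and
`l` is itself a multiple of `1 - ω`.
-/

section RootsOfUnity

variable {R : Type*} [CommRing R]

theorem one_sub_dvd_geom_sum_sub_natCast (x : R) (n : ℕ) :
    1 - x ∣ ∑ i ∈ range n, x ^ i - n := by
  have sum_sub_one : ∑ i ∈ range n, x ^ i - n = ∑ i ∈ range n, (x ^ i - 1) := by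
    simp
  rw [sum_sub_one]
  exact Finset.dvd_sum fun i _ ↦ dvd_sub_comm.mp (one_sub_dvd_one_sub_pow x i)

variable [IsDomain R]

theorem one_sub_dvd_natCast_of_isPrimitiveRoot {x : R} {n : ℕ} (hx : IsPrimitiveRoot x n)
    (hn : 1 < n) : 1 - x ∣ (n : R) := by
  obtain ⟨z, -, hz⟩ := hx.self_sub_one_pow_dvd_order hn
  exact ⟨-z, by rw [hz]; ring⟩

theorem one_sub_sq_dvd_one_sub_pow {x : R} {m n : ℕ} (hx : IsPrimitiveRoot (x ^ m) n)
    (hn : 1 < n) (hnm : n ∣ m) : (1 - x) ^ 2 ∣ 1 - x ^ m := by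
  have dvd_m : 1 - x ∣ (m : R) :=
    (one_sub_dvd_one_sub_pow x m).trans <|
      (one_sub_dvd_natCast_of_isPrimitiveRoot hx hn).trans (Nat.cast_dvd_cast hnm)
  have dvd_geom_sum : 1 - x ∣ ∑ i ∈ range m, x ^ i :=
    (dvd_iff_dvd_of_dvd_sub (one_sub_dvd_geom_sum_sub_natCast x m)).mpr dvd_m
  rw [← mul_neg_geom_sum, sq]
  exact mul_dvd_mul_left _ dvd_geom_sum

end RootsOfUnity

section MulChar

variable {M : Type*} [CommMonoid M]

theorem orderOf_mulChar_eq_orderOf_apply {R : Type*} [CommRing R] {g : Mˣ}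
    (hg : ∀ x, x ∈ Subgroup.zpowers g) (χ : MulChar M R) : orderOf χ = orderOf (χ g) := by
  refine orderOf_eq_orderOf_iff.mpr fun n ↦ ?_
  rw [MulChar.eq_iff hg, MulChar.pow_apply_coe, MulChar.one_apply_coe]

theorem orderOf_mulChar_ringHomComp {R S : Type*} [CommRing R] [CommRing S] (χ : MulChar M R)
    {f : R →+* S} (hf : Function.Injective f) : orderOf (χ.ringHomComp f) = orderOf χ :=
  orderOf_injective (MulChar.ringHomCompHom f) (MulChar.injective_ringHomComp hf) χ

theorem exists_mulChar_coe_eq_and_orderOf_eq {F R : Type*} [Field F] [CommRing R] [IsDomain R]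
    {f : F → R} (hf0 : f 0 = 0) (hfmul : ∀ x y, f (x * y) = f x * f y) {γ : F}
    (hγ : ∀ x : F, x ≠ 0 → ∃ k : ℕ, γ ^ k = x) (hfγ : f γ ≠ 0) :
    ∃ χ : MulChar F R, ⇑χ = f ∧ orderOf χ = orderOf (f γ) := by
  have hγ0 : γ ≠ 0 := by
    rintro rfl
    exact hfγ hf0
  have hf1 : f 1 = 1 := by
    rw [← mul_eq_left₀ hfγ, ← hfmul, mul_one]
  have generates : ∀ u : Fˣ, u ∈ Subgroup.zpowers (Units.mk0 γ hγ0) := fun u ↦ by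
    obtain ⟨k, hk⟩ := hγ u u.ne_zero
    exact ⟨k, Units.ext (by simpa using hk)⟩
  let χ : MulChar F R :=
    { toFun := f
      map_one' := hf1
      map_mul' := hfmul
      map_nonunit' := fun a ha ↦ by rw [not_not.mp (ha <| IsUnit.mk0 a ·), hf0] }
  exact ⟨χ, rfl, orderOf_mulChar_eq_orderOf_apply generates χ⟩

variable [Finite Mˣ] (R : Type*) {A : Type*} [CommRing R] [CommRing A] [Algebra R A]

theorem isIntegral_mulChar_apply (χ : MulChar M A) (a : M) : IsIntegral R (χ a) := by
  by_cases ha : IsUnit a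
  · obtain ⟨u, rfl⟩ := ha
    refine IsIntegral.of_pow (Nat.card_pos (α := Mˣ)) ?_
    rw [← map_pow, ← Units.val_pow_eq_pow_val, pow_card_eq_one', Units.val_one, map_one]
    exact isIntegral_one
  · rw [χ.map_nonunit ha]
    exact isIntegral_zero

theorem exists_mulChar_ringHomComp_integralClosure_eq (χ : MulChar M A) :
    ∃ ψ : MulChar M (integralClosure R A), ψ.ringHomComp (algebraMap _ A) = χ :=
  ⟨{ toMonoidHom := χ.toMonoidHom.codRestrict (integralClosure R A) (isIntegral_mulChar_apply R χ)
     map_nonunit' := fun _ ha ↦ Subtype.ext (χ.map_nonunit ha) }, rfl⟩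

end MulChar

section JacobiSum

variable {F : Type*} [Field F]

theorem ringHomComp_eq_one_of_pow_eq_one [Finite F] {R S : Type*} [CommRing R] [IsDomain R]
    [CommRing S] {ρ : MulChar F R} {n : ℕ} [NeZero n] (hρ : ρ ^ n = 1) {ω : R}
    (hω : IsPrimitiveRoot ω n) {f : R →+* S} (hf : f ω = 1) : ρ.ringHomComp f = 1 := by
  ext u
  obtain ⟨k, -, hk⟩ := MulChar.exists_apply_eq_pow hρ hω u.ne_zero
  rw [MulChar.ringHomComp_apply, hk, map_pow, hf, one_pow, MulChar.one_apply_coe]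

theorem charPow_mulChar [DecidableEq F] (χ : MulChar F ℂ) (i : ℤ) (v : F) :
    charPow χ i v = (χ ^ i) v := by
  rcases eq_or_ne v 0 with rfl | hv
  · rw [charPow, if_pos rfl, MulChar.map_zero]
  · lift v to Fˣ using hv.isUnit
    rw [charPow, if_neg v.ne_zero, MulChar.zpow_apply_coe, ← MulChar.coe_toUnitHom,
      ← MulChar.coe_toUnitHom, map_zpow, Units.val_zpow_eq_zpow_val]

variable [Fintype F]

section Domain

variable {R : Type*} [CommRing R] [IsDomain R]

theorem apply_neg_one_mul_jacobiSum_self {η : MulChar F R} (hη : η ^ 2 = 1) (hη1 : η ≠ 1) :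
    η (-1) * jacobiSum η η = -1 := by
  have inv_eq : η⁻¹ = η := inv_eq_of_mul_eq_one_left (by rw [← sq, hη])
  have jacobi_eq : jacobiSum η η = -η (-1) := by
    simpa only [inv_eq] using jacobiSum_nontrivial_inv hη1
  rw [jacobi_eq, mul_neg, ← map_mul, neg_one_mul, neg_neg, map_one]

theorem one_sub_dvd_jacobiSum_mul_quadratic_add_one {η ρ : MulChar F R} (hη : η ^ 2 = 1)
    (hη1 : η ≠ 1) {n : ℕ} [NeZero n] (hρ : ρ ^ n = 1) {ω : R} (hω : IsPrimitiveRoot ω n) :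
    1 - ω ∣ (η * ρ) (-1) * jacobiSum (η * ρ) η + 1 := by
  let π := Ideal.Quotient.mk (Ideal.span {1 - ω})
  have π_ω : π ω = 1 :=
    (Ideal.Quotient.eq.mpr (Ideal.mem_span_singleton_self (1 - ω))).symm
  have untwist : (η * ρ).ringHomComp π = η.ringHomComp π := by
    rw [MulChar.ringHomComp_mul, ringHomComp_eq_one_of_pow_eq_one hρ hω π_ω, mul_one]
  rw [← Ideal.mem_span_singleton, ← Ideal.Quotient.eq_zero_iff_mem]
  calc π ((η * ρ) (-1) * jacobiSum (η * ρ) η + 1)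
      = (η * ρ).ringHomComp π (-1) *
          jacobiSum ((η * ρ).ringHomComp π) (η.ringHomComp π) + 1 := by
        rw [jacobiSum_ringHomComp, MulChar.ringHomComp_apply, map_add, map_mul, map_one]
    _ = π (η (-1) * jacobiSum η η + 1) := by
        rw [untwist, jacobiSum_ringHomComp, MulChar.ringHomComp_apply, map_add, map_mul, map_one]
    _ = 0 := by
        rw [apply_neg_one_mul_jacobiSum_self hη hη1, neg_add_cancel, map_zero]

theorem one_sub_sq_dvd_jacobiSum_zpow_add_pow {l : ℕ} (hl : 1 < l) {χ : MulChar F R}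
    (hχ : orderOf χ = 2 * l ^ 2) {ζ : R} (hζ : IsPrimitiveRoot ζ (l ^ 2)) {d : ℤ}
    (hd : Even (d - l)) (k : ℕ) :
    (1 - ζ) ^ 2 ∣ (χ ^ (d * l)) (-1) * jacobiSum (χ ^ (d * l)) (χ ^ (l ^ 2)) + (ζ ^ l) ^ k := by
  have : NeZero l := ⟨by omega⟩
  have hω : IsPrimitiveRoot (ζ ^ l) l := hζ.pow (by positivity) (sq l)
  have quadratic : (χ ^ l ^ 2) ^ 2 = 1 := by
    rw [← pow_mul, mul_comm, ← hχ, pow_orderOf_eq_one]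
  have nontrivial : χ ^ l ^ 2 ≠ 1 :=
    pow_ne_one_of_lt_orderOf (by positivity) (by rw [hχ]; nlinarith)
  obtain ⟨m, hm⟩ := hd
  have twist : χ ^ (d * l) = χ ^ l ^ 2 * (χ ^ (2 * l)) ^ m := by
    rw [← zpow_natCast, ← zpow_natCast, ← zpow_mul, ← zpow_add]
    congr 1
    push_cast
    linear_combination (l : ℤ) * hm
  have twist_pow : ((χ ^ (2 * l)) ^ m) ^ l = 1 := by
    rw [← zpow_natCast, zpow_comm, zpow_natCast, ← pow_mul, mul_assoc, ← sq, ← hχ,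
      pow_orderOf_eq_one, one_zpow]
  refine (one_sub_sq_dvd_one_sub_pow hω hl dvd_rfl).trans ?_
  rw [twist]
  have jacobi_dvd := one_sub_dvd_jacobiSum_mul_quadratic_add_one quadratic nontrivial twist_pow hω
  convert jacobi_dvd.sub (one_sub_dvd_one_sub_pow (ζ ^ l) k) using 1
  ring

end Domain

variable [DecidableEq F]

theorem jSum_mulChar (χ : MulChar F ℂ) (i j : ℤ) :
    jSum χ i j = (χ ^ i) (-1) * jacobiSum (χ ^ i) (χ ^ j) := by
  simp only [jSum, charPow_mulChar, jacobiSum, Finset.mul_sum]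
  refine Fintype.sum_equiv (Equiv.neg F) _ _ fun v ↦ ?_
  rw [Equiv.neg_apply, ← mul_assoc, ← map_mul, neg_one_mul, neg_neg, sub_neg_eq_add, add_comm]

theorem jSum_ringHomComp {A : Type*} [CommRing A] (χ : MulChar F A) (f : A →+* ℂ) (i j : ℤ) :
    jSum (χ.ringHomComp f) i j = f ((χ ^ i) (-1) * jacobiSum (χ ^ i) (χ ^ j)) := by
  rw [jSum_mulChar, MulChar.ringHomComp_zpow, MulChar.ringHomComp_zpow, jacobiSum_ringHomComp,
    MulChar.ringHomComp_apply, map_mul]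

end JacobiSum

theorem isIntegral_div_of_dvd {R K : Type*} [CommRing R] [Field K] [Algebra R K]
    {a b : integralClosure R K} (h : b ∣ a) : IsIntegral R ((a : K) / b) := by
  obtain ⟨c, rfl⟩ := h
  rcases eq_or_ne (b : K) 0 with hb | hb
  · rw [hb, div_zero]
    exact isIntegral_zero
  · rw [Subalgebra.coe_mul, mul_div_cancel_left₀ _ hb]
    exact c.2

theorem jacobiSum_dl_congruence_general {F : Type*} [Field F] [Fintype F] [DecidableEq F] {l : ℕ}
    (hl : 1 < l) {χ : MulChar F ℂ} (hχ : orderOf χ = 2 * l ^ 2) {ζ : ℂ}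
    (hζ : IsPrimitiveRoot ζ (l ^ 2)) {d : ℤ} (hd : Even (d - l)) (n : ℤ) :
    IsIntegral ℤ ((jSum χ (d * l) ((l : ℤ) ^ 2) + ζ ^ (n * l)) / (1 - ζ) ^ 2) := by
  let ι := algebraMap (integralClosure ℤ ℂ) ℂ
  have ι_injective : Function.Injective ι := Subtype.val_injective
  have : NeZero l := ⟨by omega⟩
  obtain ⟨k, -, hk⟩ : ∃ k < l, (ζ ^ l) ^ k = ζ ^ (n * l) := by
    refine (hζ.pow (by positivity) (sq l)).eq_pow_of_pow_eq_one ?_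
    rw [← zpow_natCast, ← zpow_mul, mul_assoc, ← sq, mul_comm, zpow_mul, ← Nat.cast_pow,
      zpow_natCast, hζ.pow_eq_one, one_zpow]
  obtain ⟨ψ, rfl⟩ := exists_mulChar_ringHomComp_integralClosure_eq ℤ χ
  obtain ⟨z, rfl⟩ : ∃ z, ι z = ζ := ⟨⟨ζ, hζ.isIntegral (by positivity)⟩, rfl⟩
  rw [orderOf_mulChar_ringHomComp ψ ι_injective] at hχ
  have dvd := one_sub_sq_dvd_jacobiSum_zpow_add_pow hl hχ (hζ.of_map_of_injective ι_injective) hd k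
  have integral := isIntegral_div_of_dvd dvd
  rw [jSum_ringHomComp, ← hk]
  exact_mod_cast integral

theorem jacobiSum_dl_congruence {F : Type*} [Field F] [Fintype F] [DecidableEq F]
    (l p r q : ℕ) (hl : l.Prime) (hl3 : 3 ≤ l) (hp : p.Prime) (hr : 0 < r)
    (hq : q = p ^ r) (hql : q % (2 * l ^ 2) = 1) (hcard : Fintype.card F = q)
    (γ : F) (hγ : ∀ x : F, x ≠ 0 → ∃ k : ℕ, γ ^ k = x)
    (ζ : ℂ) (hζ : ζ = Complex.exp (2 * Real.pi * Complex.I / ((2 * l ^ 2 : ℕ) : ℂ)))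
    (ζl : ℂ) (hζl : ζl = ζ ^ 2)
    (χ : F → ℂ) (hχ0 : χ 0 = 0) (hχγ : χ γ = ζ)
    (hχmul : ∀ x y : F, χ (x * y) = χ x * χ y)
    (d : ℤ) (hd1 : 1 ≤ d) (hd2 : d ≤ 2 * (l : ℤ) - 1) (hdodd : Odd d) (hdl : d ≠ (l : ℤ))
    (w : ℤ) (hw : γ ^ w = 2) :
    IsIntegral ℤ ((jSum χ (d * l) ((l : ℤ) ^ 2) + ζl ^ (-(w * d * l))) / (1 - ζl) ^ 2) := by
  have hζ_prim : IsPrimitiveRoot ζ (2 * l ^ 2) := hζ ▸ isPrimitiveRoot_exp _ (by positivity)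
  obtain ⟨ψ, rfl, hψ⟩ := exists_mulChar_coe_eq_and_orderOf_eq hχ0 hχmul hγ
    (hχγ ▸ hζ_prim.ne_zero (by positivity))
  have d_sub_l_even : Even (d - l) :=
    hdodd.sub_odd (by exact_mod_cast hl.odd_of_ne_two (by omega))
  simpa only [neg_mul] using jacobiSum_dl_congruence_general hl.one_lt
    (hψ.trans (hχγ ▸ hζ_prim.eq_orderOf.symm))
    (hζl ▸ hζ_prim.pow (by positivity) rfl) d_sub_l_even (-(w * d))
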